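/- Let P_0, P_1, …, P_{n−1} be points of ℝ² (indices taken modulo n, n ≥ 3), and let O, O′ ∈ ℝ² be points such that for every i, the triples (O, P_i, P_{i+1}) and (O′, P_i, P_{i+1}) are each affinely independent. Then Σ_{i=0}^{n−1} Area(O, P_i, P_{i+1})·CC(O, P_i, P_{i+1}) = Σ_{i=0}^{n−1} Area(O′, P_i, P_{i+1})·CC(O′, P_i, P_{i+1}). In other words, the circumcenter of mass of the polygon P_0P_1⋯P_{n−1}, computed from a fan triangulation, does not depend on the choice of the apex of the fan. -/

import Mathlib

/-- The signed area of the ordered triple `(A, B, C)` of points of `ℝ²`: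
`(1/2) · det(B − A, C − A)`. -/
noncomputable def sarea (A B C : EuclideanSpace ℝ (Fin 2)) : ℝ :=
  ((B 0 - A 0) * (C 1 - A 1) - (B 1 - A 1) * (C 0 - A 0)) / 2

theorem aux_sq (c A B : EuclideanSpace ℝ (Fin 2)) (h : dist c A = dist c B) :
    (c 0 - A 0) ^ 2 + (c 1 - A 1) ^ 2 = (c 0 - B 0) ^ 2 + (c 1 - B 1) ^ 2 := by
  have h2 : dist c A ^ 2 = dist c B ^ 2 := by rw [h]
  simpa [EuclideanSpace.dist_sq_eq, Fin.sum_univ_two, Real.dist_eq, sq_abs] using h2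

theorem aux_shift (n : ℕ) [NeZero n] (f : ZMod n → ℝ) :
    ∑ i : ZMod n, (f (i + 1) - f i) = 0 := by
  rw [Finset.sum_sub_distrib, sub_eq_zero]
  exact Equiv.sum_comp (Equiv.addRight (1 : ZMod n)) f

theorem aux0 (A B C c : EuclideanSpace ℝ (Fin 2)) (h : dist c A = dist c B ∧ dist c A = dist c C) :
    sarea A B C * c 0 = ((B 0 ^ 2 + B 1 ^ 2) * C 1 - (C 0 ^ 2 + C 1 ^ 2) * B 1) / 4 +
      ((A 1 * (C 0 ^ 2 + C 1 ^ 2) - (A 0 ^ 2 + A 1 ^ 2) * C 1) / 4 -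
       (A 1 * (B 0 ^ 2 + B 1 ^ 2) - (A 0 ^ 2 + A 1 ^ 2) * B 1) / 4) := by
  have h1 := aux_sq _ _ _ h.1
  have h2 := aux_sq _ _ _ h.2
  unfold sarea
  linear_combination (C 1 - A 1) / 4 * h1 - (B 1 - A 1) / 4 * h2

theorem aux1 (A B C c : EuclideanSpace ℝ (Fin 2)) (h : dist c A = dist c B ∧ dist c A = dist c C) :
    sarea A B C * c 1 = ((C 0 ^ 2 + C 1 ^ 2) * B 0 - (B 0 ^ 2 + B 1 ^ 2) * C 0) / 4 +
      (((A 0 ^ 2 + A 1 ^ 2) * C 0 - A 0 * (C 0 ^ 2 + C 1 ^ 2)) / 4 -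
       ((A 0 ^ 2 + A 1 ^ 2) * B 0 - A 0 * (B 0 ^ 2 + B 1 ^ 2)) / 4) := by
  have h1 := aux_sq _ _ _ h.1
  have h2 := aux_sq _ _ _ h.2
  unfold sarea
  linear_combination (B 0 - A 0) / 4 * h2 - (C 0 - A 0) / 4 * h1

theorem aux_sum0 (n : ℕ) [NeZero n] (P : ZMod n → EuclideanSpace ℝ (Fin 2))
    (A : EuclideanSpace ℝ (Fin 2)) (cc : ZMod n → EuclideanSpace ℝ (Fin 2))
    (hcc : ∀ i : ZMod n, dist (cc i) A = dist (cc i) (P i) ∧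
      dist (cc i) A = dist (cc i) (P (i + 1))) :
    ∑ i : ZMod n, sarea A (P i) (P (i + 1)) * cc i 0 =
    ∑ i : ZMod n, ((P i 0 ^ 2 + P i 1 ^ 2) * P (i + 1) 1
      - (P (i + 1) 0 ^ 2 + P (i + 1) 1 ^ 2) * P i 1) / 4 := by
  rw [Finset.sum_congr rfl (fun i _ => aux0 _ _ _ _ (hcc i)), Finset.sum_add_distrib,
    aux_shift n (fun i => (A 1 * (P i 0 ^ 2 + P i 1 ^ 2) - (A 0 ^ 2 + A 1 ^ 2) * P i 1) / 4),
    add_zero]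

theorem aux_sum1 (n : ℕ) [NeZero n] (P : ZMod n → EuclideanSpace ℝ (Fin 2))
    (A : EuclideanSpace ℝ (Fin 2)) (cc : ZMod n → EuclideanSpace ℝ (Fin 2))
    (hcc : ∀ i : ZMod n, dist (cc i) A = dist (cc i) (P i) ∧
      dist (cc i) A = dist (cc i) (P (i + 1))) :
    ∑ i : ZMod n, sarea A (P i) (P (i + 1)) * cc i 1 =
    ∑ i : ZMod n, ((P (i + 1) 0 ^ 2 + P (i + 1) 1 ^ 2) * P i 0
      - (P i 0 ^ 2 + P i 1 ^ 2) * P (i + 1) 0) / 4 := by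
  rw [Finset.sum_congr rfl (fun i _ => aux1 _ _ _ _ (hcc i)), Finset.sum_add_distrib,
    aux_shift n (fun i => ((A 0 ^ 2 + A 1 ^ 2) * P i 0 - A 0 * (P i 0 ^ 2 + P i 1 ^ 2)) / 4),
    add_zero]

/-- The circumcenter of mass of a polygon `P_0 P_1 ⋯ P_{n−1}` computed from a fan triangulation
does not depend on the choice of the apex of the fan. -/
theorem ccm_fan_independent_of_apex (n : ℕ) [NeZero n] (hn : 3 ≤ n)
    (P : ZMod n → EuclideanSpace ℝ (Fin 2)) (O O' : EuclideanSpace ℝ (Fin 2))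
    (hO : ∀ i : ZMod n, AffineIndependent ℝ ![O, P i, P (i + 1)])
    (hO' : ∀ i : ZMod n, AffineIndependent ℝ ![O', P i, P (i + 1)])
    (cc cc' : ZMod n → EuclideanSpace ℝ (Fin 2))
    (hcc : ∀ i : ZMod n, dist (cc i) O = dist (cc i) (P i) ∧
      dist (cc i) O = dist (cc i) (P (i + 1)))
    (hcc' : ∀ i : ZMod n, dist (cc' i) O' = dist (cc' i) (P i) ∧
      dist (cc' i) O' = dist (cc' i) (P (i + 1))) :
    ∑ i : ZMod n, sarea O (P i) (P (i + 1)) • cc i =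
      ∑ i : ZMod n, sarea O' (P i) (P (i + 1)) • cc' i := by
  ext k
  fin_cases k
  · have := (aux_sum0 n P O cc hcc).trans (aux_sum0 n P O' cc' hcc').symm
    simpa using this
  · have := (aux_sum1 n P O cc hcc).trans (aux_sum1 n P O' cc' hcc').symm
    simpa using this
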